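/- arXiv:2504.07873 — 2 statements merged into one kernel-verified Lean document; each statement's English description precedes it below -/
import Mathlib

section
/- Let m be an odd positive integer and let a, b be real numbers. If ab ≥ 0, or if |a| ≤ b, then |a^m − b^m| ≥ |a − b|·|a|^{m−1}. -/
/-- inequality (20): for an odd positive integer `m` and real `a, b`, if
`ab ≥ 0` or `|a| ≤ b`, then `|a^m - b^m| ≥ |a - b|·|a|^{m-1}`. -/
theorem odd_power_difference_bound
    (m : ℕ) (hm : Odd m) (hm0 : 0 < m) (a b : ℝ)
    (h : a * b ≥ 0 ∨ |a| ≤ b) :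
    |a ^ m - b ^ m| ≥ |a - b| * |a| ^ (m - 1) := by
  obtain ⟨k, rfl⟩ := hm
  have key : 0 ≤ ((a - b) * b) * (a ^ (2 * k) - b ^ (2 * k)) := by
    have mono : ∀ x y : ℝ, |x| ≤ |y| → x ^ (2 * k) ≤ y ^ (2 * k) := by
      intro x y hxy
      rw [pow_mul, pow_mul]
      exact pow_le_pow_left₀ (sq_nonneg x) (sq_le_sq.mpr hxy) k
    rcases le_total |a| |b| with hab | hab
    · have h1 := mono a b hab
      have h2 : a * b ≤ b * b := by
        calc a * b ≤ |a * b| := le_abs_self _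
          _ = |a| * |b| := abs_mul a b
          _ ≤ |b| * |b| := by gcongr
          _ = b * b := abs_mul_abs_self b
      exact mul_nonneg_of_nonpos_of_nonpos (by linarith) (by linarith)
    · have h1 := mono b a hab
      rcases h with h | h
      · have h2 : b * b ≤ a * b := by
          calc b * b = |b| * |b| := (abs_mul_abs_self b).symm
            _ ≤ |a| * |b| := by gcongr
            _ = |a * b| := (abs_mul a b).symm
            _ = a * b := abs_of_nonneg h
        exact mul_nonneg (by linarith) (by linarith)
      · have h3 : |a| = |b| := le_antisymm (h.trans (le_abs_self b)) hab
        have h4 := mono a b h3.le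
        rw [le_antisymm h4 h1]; simp
  have hA : 0 ≤ a ^ (2 * k) := by rw [pow_mul]; positivity
  have hx : |a| ^ (2 * k + 1 - 1) = |a ^ (2 * k)| := by
    rw [abs_pow]; simp
  rw [hx, ← abs_mul, ge_iff_le, ← sq_le_sq]
  have e : a ^ (2 * k + 1) - b ^ (2 * k + 1)
      = (a - b) * a ^ (2 * k) + b * (a ^ (2 * k) - b ^ (2 * k)) := by ring
  rw [e]
  nlinarith [mul_nonneg hA key, sq_nonneg (b * (a ^ (2 * k) - b ^ (2 * k)))]
end

section
/- Let n be an even integer greater than 2. For every δ > 0 there exists M > 0 such that for every integer s > M and every t with |t| ≤ 1/2: ∑_{k∈ℤ} (2πk+πt)^{2(n−2)} / ((2πs+π)^n − (2πk+πt)^n)² < δ. -/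
open Real

lemma aux_abs (a y : ℝ) (ha : 0 < a) (hy : 0 ≤ y) (m : ℕ) :
    |a - y| * (a * y ^ m) ≤ |a ^ (m + 2) - y ^ (m + 2)| := by
  have hid : a ^ (m + 2) - y ^ (m + 2) - (a - y) * (a * y ^ m)
      = a ^ 2 * (a ^ m - y ^ m) + y ^ (m + 1) * (a - y) := by ring
  have hp : 0 ≤ y ^ (m + 1) := by positivity
  rcases le_total y a with h | h
  · have h1 : y ^ m ≤ a ^ m := pow_le_pow_left₀ hy h m
    rw [abs_of_nonneg (sub_nonneg.2 h)]
    refine le_trans ?_ (le_abs_self _)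
    have := mul_nonneg (sq_nonneg a) (sub_nonneg.2 h1)
    have := mul_nonneg hp (sub_nonneg.2 h)
    linarith
  · have h1 : a ^ m ≤ y ^ m := pow_le_pow_left₀ ha.le h m
    rw [abs_of_nonpos (sub_nonpos.2 h)]
    refine le_trans ?_ (neg_le_abs _)
    have := mul_nonneg (sq_nonneg a) (sub_nonneg.2 h1)
    have := mul_nonneg hp (sub_nonneg.2 h)
    linarith

lemma aux_nonneg (a y : ℝ) (ha : 0 < a) (hy : 0 ≤ y) (hne : a - y ≠ 0) (m : ℕ) :
    y ^ (2 * m) / (a ^ (m + 2) - y ^ (m + 2)) ^ 2 ≤ 1 / a ^ 2 * (1 / (a - y) ^ 2) := by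
  have h := aux_abs a y ha hy m
  have hsq : (a - y) ^ 2 * a ^ 2 * y ^ (2 * m) ≤ (a ^ (m + 2) - y ^ (m + 2)) ^ 2 := by
    have := pow_le_pow_left₀ (by positivity) h 2
    rw [sq_abs, mul_pow, sq_abs, mul_pow, ← pow_mul, mul_comm m 2] at this
    linarith
  have h0 : 0 < (a - y) ^ 2 * a ^ 2 := by positivity
  apply div_le_of_le_mul₀ (sq_nonneg _) (by positivity)
  rw [one_div_mul_one_div, mul_comm (a ^ 2), div_mul_eq_mul_div, one_mul, le_div_iff₀ h0]
  linarith

lemma aux_term (a x : ℝ) (ha : 0 < a) (h1 : a - x ≠ 0) (h2 : a + x ≠ 0) (m : ℕ)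
    (hm : Even (m + 2)) :
    x ^ (2 * m) / (a ^ (m + 2) - x ^ (m + 2)) ^ 2
      ≤ 1 / a ^ 2 * (1 / (a - x) ^ 2 + 1 / (a + x) ^ 2) := by
  have p1 : 0 ≤ 1 / a ^ 2 * (1 / (a - x) ^ 2) := by positivity
  have p2 : 0 ≤ 1 / a ^ 2 * (1 / (a + x) ^ 2) := by positivity
  rw [mul_add]
  rcases le_total 0 x with h | h
  · have := aux_nonneg a x ha h h1 m
    linarith
  · have := aux_nonneg a (-x) ha (by linarith) (by simpa using h2) m
    rw [hm.neg_pow, (even_two_mul m).neg_pow, sub_neg_eq_add] at this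
    linarith

lemma aux_g (j : ℤ) (u : ℝ) (hu : |u| ≤ 1 / 2) :
    π * (2 * j + 1 + u) ≠ 0 ∧
    1 / (π * (2 * j + 1 + u)) ^ 2 ≤ 4 * (1 / (((2 * j + 1 : ℤ) : ℝ)) ^ 2) := by
  have hj : (1 : ℝ) ≤ |((2 * j + 1 : ℤ) : ℝ)| := by
    have : (1 : ℤ) ≤ |2 * j + 1| := Int.one_le_abs (by omega)
    exact_mod_cast this
  have hcast : ((2 * j + 1 : ℤ) : ℝ) = 2 * j + 1 := by push_cast; ring
  rw [hcast] at hj ⊢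
  have h3 : |(2 * j + 1 : ℝ)| / 2 ≤ |2 * j + 1 + u| := by
    have := abs_sub_abs_le_abs_sub (2 * j + 1 : ℝ) (-u)
    rw [abs_neg, sub_neg_eq_add] at this
    linarith
  have h4 : |(2 * j + 1 : ℝ)| / 2 ≤ |π * (2 * j + 1 + u)| := by
    rw [abs_mul, abs_of_pos pi_pos]
    nlinarith [pi_gt_three, abs_nonneg (2 * j + 1 + u)]
  have h5 : (2 * j + 1 : ℝ) ^ 2 / 4 ≤ (π * (2 * j + 1 + u)) ^ 2 := by
    have := pow_le_pow_left₀ (by positivity) h4 2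
    rw [sq_abs, div_pow, sq_abs] at this
    linarith
  have h6 : 0 < (2 * j + 1 : ℝ) ^ 2 / 4 := by
    rw [← sq_abs]
    have : 0 < |(2 * j + 1 : ℝ)| := by linarith
    positivity
  refine ⟨abs_pos.1 (by linarith), ?_⟩
  calc _ ≤ 1 / ((2 * j + 1 : ℝ) ^ 2 / 4) := one_div_le_one_div_of_le h6 h5
    _ = _ := by rw [one_div_div]; ring

/-- for even `n > 2` and every `δ > 0`, there is `M > 0` such that for every
integer `s > M` and every `t` with `|t| ≤ 1/2`,
`∑_{k∈ℤ} (2πk+πt)^{2(n-2)} / ((2πs+π)^n - (2πk+πt)^n)² < δ`. -/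
theorem tail_sum_small
    (n : ℕ) (hn : Even n) (hn2 : 2 < n) (δ : ℝ) (hδ : 0 < δ) :
    ∃ M : ℝ, 0 < M ∧ ∀ s : ℤ, M < (s : ℝ) → ∀ t : ℝ, |t| ≤ 1 / 2 →
      ∑' k : ℤ, (2 * π * k + π * t) ^ (2 * (n - 2)) /
        ((2 * π * s + π) ^ n - (2 * π * k + π * t) ^ n) ^ 2 < δ := by
  obtain ⟨m, rfl⟩ : ∃ m, n = m + 2 := ⟨n - 2, by omega⟩
  rw [Nat.add_sub_cancel]
  let g : ℤ → ℝ := fun j => 4 * (1 / (((2 * j + 1 : ℤ) : ℝ)) ^ 2)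
  have hg : Summable g := by
    have h := (Real.summable_one_div_int_pow (p := 2)).mpr (by norm_num)
    have hi : Function.Injective (fun j : ℤ => 2 * j + 1) := by
      intro a b hab
      simp only at hab
      omega
    exact (h.comp_injective hi).mul_left 4
  have hG0 : 0 ≤ ∑' j, g j := tsum_nonneg fun j => by positivity
  refine ⟨1 + 2 * (∑' j, g j) / δ, by positivity, ?_⟩
  intro s hs t ht
  have hGd : 0 ≤ 2 * (∑' j, g j) / δ := by positivity
  have hs1 : (1 : ℝ) < s := by linarith
  have ha : (s : ℝ) < 2 * π * s + π := by nlinarith [pi_gt_three]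
  set a : ℝ := 2 * π * s + π with ha_def
  have ha0 : 0 < a := by linarith
  let e1 : ℤ ≃ ℤ := Equiv.subLeft s
  let e2 : ℤ ≃ ℤ := Equiv.addLeft s
  have s1 : HasSum (fun k : ℤ => g (s - k)) (∑' j, g j) := (e1.hasSum_iff (f := g)).2 hg.hasSum
  have s2 : HasSum (fun k : ℤ => g (s + k)) (∑' j, g j) := (e2.hasSum_iff (f := g)).2 hg.hasSum
  have s3 := (s1.add s2).mul_left (1 / a ^ 2)
  have hle : ∀ k : ℤ, (2 * π * k + π * t) ^ (2 * m) /
        (a ^ (m + 2) - (2 * π * k + π * t) ^ (m + 2)) ^ 2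
        ≤ 1 / a ^ 2 * (g (s - k) + g (s + k)) := by
    intro k
    obtain ⟨n1, b1⟩ := aux_g (s - k) (-t) (by rwa [abs_neg])
    obtain ⟨n2, b2⟩ := aux_g (s + k) t ht
    have q1 : π * (2 * ((s - k : ℤ) : ℝ) + 1 + -t) = a - (2 * π * k + π * t) := by
      rw [ha_def]; push_cast; ring
    have q2 : π * (2 * ((s + k : ℤ) : ℝ) + 1 + t) = a + (2 * π * k + π * t) := by
      rw [ha_def]; push_cast; ring
    rw [q1] at n1 b1
    rw [q2] at n2 b2
    refine (aux_term a _ ha0 n1 n2 m hn).trans ?_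
    exact mul_le_mul_of_nonneg_left (add_le_add b1 b2) (by positivity)
  have hnn : ∀ k : ℤ, 0 ≤ (2 * π * k + π * t) ^ (2 * m) /
        (a ^ (m + 2) - (2 * π * k + π * t) ^ (m + 2)) ^ 2 := fun k =>
    div_nonneg ((even_two_mul m).pow_nonneg _) (sq_nonneg _)
  have hsum := Summable.of_nonneg_of_le hnn hle s3.summable
  have hfin := hsum.tsum_le_tsum hle s3.summable
  rw [s3.tsum_eq] at hfin
  refine hfin.trans_lt ?_
  have h7 : 2 * (∑' j, g j) / δ < a ^ 2 := by nlinarith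
  rw [div_lt_iff₀ hδ] at h7
  rw [div_mul_eq_mul_div, one_mul, div_lt_iff₀ (by positivity)]
  linarith
end
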